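/- Let condition B hold and let v_ε → ∞ as ε → 0. Then condition G: f_ε → f₀ ∈ (0, ∞) as ε → 0 is necessary and sufficient for the convergence in distribution of κ_ε(1) = Σ_{n=1}^{[v_ε]} f_{ε,η_{ε,n−1}} (for some family of initial distributions in the necessity statement, for any family in the sufficiency statement) to a nonnegative random variable whose distribution is not concentrated at zero; in that case the limiting random variable equals the constant f₀, and for every T > 0 and δ > 0, P(sup_{0≤t≤T} |κ_ε(t) − f₀t| > δ) → 0 as ε → 0. -/

import Mathlib

open MeasureTheory Filter Set
open scoped Topology ENNReal

noncomputable section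

/-- Condition B: there exists a ring chain of states `c 0, c 1, …, c N = c 0`
containing all states of the phase space, with
`liminf_{ε→0+} p ε (c (k-1)) (c k) > 0` for `k = 1, …, N`. -/
def CondB {m : ℕ} (p : ℝ → Fin m → Fin m → ℝ) : Prop :=
  ∃ N : ℕ, 0 < N ∧ ∃ c : ℕ → Fin m, c N = c 0 ∧
    (∀ i : Fin m, ∃ k ≤ N, c k = i) ∧
    ∀ k < N, 0 < Filter.liminf (fun ε => p ε (c k) (c (k + 1))) (𝓝[>] (0 : ℝ))

/-- `π` is a stationary distribution of the transition matrix `p`. -/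
def IsStationaryDist {m : ℕ} (p : Fin m → Fin m → ℝ) (π : Fin m → ℝ) : Prop :=
  (∀ i, 0 ≤ π i) ∧ (∑ i, π i = 1) ∧ ∀ j, π j = ∑ i, π i * p i j

/-- The deterministic-reward step-sum process `κ_ε(t) = Σ_{n=1}^{[t v_ε]} f_{ε,η_{ε,n−1}}`. -/
def fStep {m : ℕ} {Ω : Type} (η : ℝ → ℕ → Ω → Fin m) (f : ℝ → Fin m → ℝ)
    (v : ℝ → ℝ) (ε t : ℝ) (ω : Ω) : ℝ :=
  ∑ n ∈ Finset.Icc 1 (Nat.floor (t * v ε)), f ε (η ε (n - 1) ω)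

/-- `f_ε = v_ε Σ_i π_{ε,i} f_{ε,i}`. -/
def fBar {m : ℕ} (π : ℝ → Fin m → ℝ) (f : ℝ → Fin m → ℝ) (v : ℝ → ℝ) (ε : ℝ) : ℝ :=
  v ε * ∑ i, π ε i * f ε i

lemma ring_ind {m N : ℕ} (c : ℕ → Fin m) (hcN : c N = c 0)
    (hall : ∀ i : Fin m, ∃ k ≤ N, c k = i) (Q : ℕ → Fin m → Prop)
    (hmono : ∀ n i, Q n i → Q (n+1) i)
    (hstep : ∀ n, ∀ k < N, Q n (c k) → Q (n+1) (c (k+1)))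
    (i0 : Fin m) (h0 : Q 0 i0) : ∀ i, Q (2*N) i := by
  have up : ∀ d n k, k + d ≤ N → Q n (c k) → Q (n+d) (c (k+d)) := by
    intro d
    induction d with
    | zero => intro n k _ h; simpa using h
    | succ d ih =>
      intro n k hk h
      exact hstep (n+d) (k+d) (by omega) (ih n k (by omega) h)
  have mono : ∀ d n i, Q n i → Q (n+d) i := by
    intro d
    induction d with
    | zero => intro n i h; simpa using h
    | succ d ih => intro n i h; exact hmono _ _ (ih n i h)
  intro i
  obtain ⟨k0, hk0, rfl⟩ := hall i0
  obtain ⟨k, hk, rfl⟩ := hall i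
  have h1 := up (N - k0) 0 k0 (by omega) h0
  rw [show k0 + (N - k0) = N by omega, hcN] at h1
  have h2 := up k _ 0 (by omega) h1
  have h3 := mono (k0 + (N - k)) _ _ h2
  rw [show 0 + (N - k0) + k + (k0 + (N - k)) = 2 * N by omega, zero_add] at h3
  exact h3

lemma osc_bound {m N : ℕ} (hm : 0 < m) (c : ℕ → Fin m) (hcN : c N = c 0)
    (hall : ∀ i : Fin m, ∃ k ≤ N, c k = i) (P : Fin m → Fin m → ℝ)
    (hP0 : ∀ i j, 0 ≤ P i j) (hP1 : ∀ i, ∑ j, P i j = 1)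
    (a : ℝ) (ha : 0 < a) (ha1 : a ≤ 1) (hring : ∀ k < N, a ≤ P (c k) (c (k+1)))
    (h : Fin m → ℝ) (δ : ℝ) (hδ : ∀ i, |h i - ∑ j, P i j * h j| ≤ δ) :
    ∃ M, ∀ i, h i ≤ M ∧ a ^ (2*N) * (M - h i) ≤ (2*N : ℕ) * δ := by
  have : Nonempty (Fin m) := ⟨⟨0, hm⟩⟩
  obtain ⟨i0, hi0⟩ := Finite.exists_max h
  refine ⟨h i0, fun i => ⟨hi0 i, ?_⟩⟩
  have hδ0 : 0 ≤ δ := (abs_nonneg _).trans (hδ i0)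
  refine ring_ind c hcN hall (fun n i => a ^ n * (h i0 - h i) ≤ n * δ) ?_ ?_ i0 (by simp) i
  · intro n i hn
    have : a ^ (n+1) * (h i0 - h i) ≤ a ^ n * (h i0 - h i) := by
      apply mul_le_mul_of_nonneg_right _ (sub_nonneg.2 (hi0 i))
      exact pow_le_pow_of_le_one ha.le ha1 (Nat.le_succ n)
    push_cast
    linarith
  · intro n k hk hn
    have h1 : P (c k) (c (k+1)) * (h i0 - h (c (k+1))) ≤ ∑ j, P (c k) j * (h i0 - h j) :=
      Finset.single_le_sum (f := fun j => P (c k) j * (h i0 - h j))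
        (fun j _ => mul_nonneg (hP0 _ _) (sub_nonneg.2 (hi0 j))) (Finset.mem_univ _)
    have h2 : ∑ j, P (c k) j * (h i0 - h j) = h i0 - ∑ j, P (c k) j * h j := by
      simp only [mul_sub, Finset.sum_sub_distrib, ← Finset.sum_mul, hP1, one_mul]
    have h3 := (abs_le.1 (hδ (c k))).2
    have h4 : a * (h i0 - h (c (k+1))) ≤ P (c k) (c (k+1)) * (h i0 - h (c (k+1))) :=
      mul_le_mul_of_nonneg_right (hring k hk) (sub_nonneg.2 (hi0 _))
    have h5 : a * (h i0 - h (c (k+1))) ≤ (h i0 - h (c k)) + δ := by linarith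
    have h6 : a ^ n * (a * (h i0 - h (c (k+1)))) ≤ a ^ n * ((h i0 - h (c k)) + δ) :=
      mul_le_mul_of_nonneg_left h5 (by positivity)
    have h7 : a ^ n * δ ≤ 1 * δ := mul_le_mul_of_nonneg_right (pow_le_one₀ ha.le ha1) hδ0
    show a ^ (n+1) * _ ≤ _
    push_cast
    rw [pow_succ]
    nlinarith

lemma poisson {m N : ℕ} (hm : 0 < m) (c : ℕ → Fin m) (hcN : c N = c 0)
    (hall : ∀ i : Fin m, ∃ k ≤ N, c k = i) (P : Fin m → Fin m → ℝ)
    (hP0 : ∀ i j, 0 ≤ P i j) (hP1 : ∀ i, ∑ j, P i j = 1)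
    (a : ℝ) (ha : 0 < a) (ha1 : a ≤ 1) (hring : ∀ k < N, a ≤ P (c k) (c (k+1)))
    (π : Fin m → ℝ) (hπ : IsStationaryDist P π)
    (g : Fin m → ℝ) (hg : ∑ i, π i * g i = 0) (δ : ℝ) (hδ : ∀ i, |g i| ≤ δ) :
    ∃ h : Fin m → ℝ, (∀ i, h i - ∑ j, P i j * h j = g i) ∧
      ∀ i, |h i| ≤ (2*N : ℕ) / a ^ (2*N) * δ := by
  have hpi : ∀ h : Fin m → ℝ, ∑ i, π i * ∑ j, P i j * h j = ∑ j, π j * h j := by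
    intro h
    simp only [Finset.mul_sum]
    rw [Finset.sum_comm]
    refine Finset.sum_congr rfl fun j _ => ?_
    conv_rhs => rw [hπ.2.2 j, Finset.sum_mul]
    exact Finset.sum_congr rfl fun i _ => by ring
  let A : (Fin m → ℝ) →ₗ[ℝ] (Fin m → ℝ) :=
    { toFun := fun h i => h i - ∑ j, P i j * h j + ∑ j, π j * h j
      map_add' := by
        intro x y; ext i
        simp only [Pi.add_apply, mul_add, Finset.sum_add_distrib]; ring
      map_smul' := by
        intro r x; ext i
        simp only [Pi.smul_apply, smul_eq_mul, RingHom.id_apply, mul_add, mul_sub, Finset.mul_sum,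
          mul_left_comm] }
  have hA : ∀ h i, A h i = h i - ∑ j, P i j * h j + ∑ j, π j * h j := fun _ _ => rfl
  have hAπ : ∀ h, ∑ i, π i * A h i = ∑ j, π j * h j := by
    intro h
    simp only [hA, mul_add, mul_sub, Finset.sum_add_distrib, Finset.sum_sub_distrib, hpi,
      ← Finset.sum_mul, hπ.2.1]
    ring
  have hinj : Function.Injective A := by
    rw [injective_iff_map_eq_zero]
    intro h hh
    have h0 : ∑ j, π j * h j = 0 := by rw [← hAπ, hh]; simp
    have h1 : ∀ i, h i - ∑ j, P i j * h j = 0 := by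
      intro i
      have := hA h i
      rw [hh, h0] at this
      simpa using this.symm
    obtain ⟨M, hM⟩ := osc_bound hm c hcN hall P hP0 hP1 a ha ha1 hring h 0
      (fun i => by rw [h1]; simp)
    have h2 : ∀ i, h i = M := by
      intro i
      have h3 := (hM i).1
      have h4 := (hM i).2
      have : 0 < a ^ (2*N) := by positivity
      rw [mul_zero] at h4
      have : M - h i ≤ 0 := by
        by_contra hc
        push Not at hc
        have := mul_pos this hc
        linarith
      linarith
    have h5 : M = 0 := by
      simp only [h2, ← Finset.sum_mul, hπ.2.1] at h0
      linarith
    ext i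
    simp [h2, h5]
  obtain ⟨h, hh⟩ := (LinearMap.injective_iff_surjective.1 hinj) g
  have h0 : ∑ j, π j * h j = 0 := by rw [← hAπ, hh, hg]
  have h1 : ∀ i, h i - ∑ j, P i j * h j = g i := by
    intro i
    have := hA h i
    rw [hh, h0] at this
    linarith
  obtain ⟨M, hM⟩ := osc_bound hm c hcN hall P hP0 hP1 a ha ha1 hring h δ
      (fun i => by rw [h1]; exact hδ i)
  refine ⟨fun i => h i - M, ?_, ?_⟩
  · intro i
    simp only [mul_sub, Finset.sum_sub_distrib, ← Finset.sum_mul, hP1]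
    rw [← h1 i]; ring
  · intro i
    have hp : 0 < a ^ (2*N) := by positivity
    rw [abs_sub_comm, abs_of_nonneg (sub_nonneg.2 (hM i).1), div_mul_eq_mul_div, le_div_iff₀ hp]
    linarith [(hM i).2]

lemma pi_lower {m N : ℕ} (hm : 0 < m) (c : ℕ → Fin m) (hcN : c N = c 0)
    (hall : ∀ i : Fin m, ∃ k ≤ N, c k = i) (P : Fin m → Fin m → ℝ)
    (hP0 : ∀ i j, 0 ≤ P i j)
    (a : ℝ) (ha : 0 < a) (ha1 : a ≤ 1) (hring : ∀ k < N, a ≤ P (c k) (c (k+1)))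
    (π : Fin m → ℝ) (hπ : IsStationaryDist P π) : ∀ i, a ^ (2*N) / m ≤ π i := by
  have : Nonempty (Fin m) := ⟨⟨0, hm⟩⟩
  have hm' : (0:ℝ) < m := by exact_mod_cast hm
  obtain ⟨i0, hi0⟩ := Finite.exists_max π
  refine ring_ind c hcN hall (fun n i => a ^ n / m ≤ π i) ?_ ?_ i0 ?_
  · intro n i hn
    refine le_trans ?_ hn
    gcongr ?_ / _
    exact pow_le_pow_of_le_one ha.le ha1 (Nat.le_succ n)
  · intro n k hk hn
    have h1 : π (c k) * P (c k) (c (k+1)) ≤ π (c (k+1)) := by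
      rw [hπ.2.2 (c (k+1))]
      exact Finset.single_le_sum (f := fun i => π i * P i (c (k+1)))
        (fun j _ => mul_nonneg (hπ.1 _) (hP0 _ _)) (Finset.mem_univ _)
    refine le_trans ?_ h1
    show a ^ (n+1) / m ≤ _
    rw [pow_succ, mul_div_right_comm]
    exact mul_le_mul hn (hring k hk) ha.le (hπ.1 _)
  · have : ∑ i, π i ≤ ∑ _i : Fin m, π i0 := Finset.sum_le_sum fun i _ => hi0 i
    rw [hπ.2.1] at this
    simp at this
    rw [pow_zero, div_le_iff₀ hm']
    linarith

lemma mart_step {m : ℕ} {Ω : Type} [MeasurableSpace Ω] (μ : Measure Ω) [IsProbabilityMeasure μ]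
    (η : ℕ → Ω → Fin m) (hη : ∀ n, Measurable (η n)) (P : Fin m → Fin m → ℝ)
    (H : ∀ (n : ℕ) (w : Fin (n+1) → Fin m) (j : Fin m),
      μ.real {ω | (∀ k : Fin (n+1), η k ω = w k) ∧ η (n+1) ω = j}
        = μ.real {ω | ∀ k : Fin (n+1), η k ω = w k} * P (w (Fin.last n)) j)
    (h : Fin m → ℝ) (n : ℕ) (φ : (Fin (n+1) → Fin m) → ℝ) :
    ∫ ω, φ (fun k => η k ω) * (h (η (n+1) ω) - ∑ j, P (η n ω) j * h j) ∂μ = 0 := by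
  classical
  set A : (Fin (n+1) → Fin m) → Set Ω := fun w => {ω | ∀ k : Fin (n+1), η k ω = w k} with hAdef
  set B : (Fin (n+1) → Fin m) → Fin m → Set Ω :=
    fun w j => {ω | (∀ k : Fin (n+1), η k ω = w k) ∧ η (n+1) ω = j} with hBdef
  have hs : ∀ k j, MeasurableSet {ω | η k ω = j} := fun k j =>
    hη k (measurableSet_singleton j)
  have hAm : ∀ w, MeasurableSet (A w) := by
    intro w
    have : A w = ⋂ k : Fin (n+1), {ω | η k ω = w k} := by ext; simp [hAdef]
    rw [this]
    exact MeasurableSet.iInter fun k => hs _ _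
  have hBm : ∀ w j, MeasurableSet (B w j) := fun w j => (hAm w).inter (hs _ _)
  have key : (fun ω => φ (fun k => η k ω) * (h (η (n+1) ω) - ∑ j, P (η n ω) j * h j))
      = fun ω => ∑ w, ∑ j, ((φ w * h j) * (B w j).indicator (fun _ => (1:ℝ)) ω
        - (φ w * P (w (Fin.last n)) j * h j) * (A w).indicator (fun _ => (1:ℝ)) ω) := by
    funext ω
    rw [Finset.sum_eq_single (fun k : Fin (n+1) => η k ω)]
    · have hA1 : ω ∈ A (fun k : Fin (n+1) => η k ω) := fun k => rfl
      simp only [Finset.sum_sub_distrib, Set.indicator_of_mem hA1, mul_one, Fin.val_last]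
      rw [Finset.sum_eq_single (f := fun x => (φ fun k : Fin (n+1) => η k ω) * h x *
        (B (fun k : Fin (n+1) => η k ω) x).indicator (fun _ => (1:ℝ)) ω) (η (n+1) ω)]
      · rw [Set.indicator_of_mem (show ω ∈ B _ _ from ⟨fun k => rfl, rfl⟩)]
        rw [mul_one, mul_sub, Finset.mul_sum]
        simp only [mul_assoc]
      · intro j _ hj
        rw [Set.indicator_of_notMem, mul_zero]
        rintro ⟨_, h2⟩
        exact hj h2.symm
      · simp
    · intro w _ hw
      have hA1 : ω ∉ A w := fun h1 => hw (funext fun k => (h1 k).symm)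
      refine Finset.sum_eq_zero fun j _ => ?_
      rw [Set.indicator_of_notMem hA1, Set.indicator_of_notMem (fun h1 => hA1 h1.1)]
      simp
    · simp
  have hiA : ∀ w, Integrable ((A w).indicator (fun _ => (1:ℝ))) μ := fun w =>
    (integrable_const (1:ℝ)).indicator (hAm w)
  have hiB : ∀ w j, Integrable ((B w j).indicator (fun _ => (1:ℝ))) μ := fun w j =>
    (integrable_const (1:ℝ)).indicator (hBm w j)
  rw [key, integral_finsetSum]
  · refine Finset.sum_eq_zero fun w _ => ?_
    rw [integral_finsetSum]
    · refine Finset.sum_eq_zero fun j _ => ?_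
      rw [integral_sub ((hiB w j).const_mul _) ((hiA w).const_mul _), integral_const_mul,
        integral_const_mul, integral_indicator (hAm w), integral_indicator (hBm w j)]
      simp only [integral_const, smul_eq_mul, mul_one, measureReal_restrict_apply_univ]
      rw [H n w j]
      ring
    · intro j _
      exact ((hiB w j).const_mul _).sub ((hiA w).const_mul _)
  · intro w _
    refine integrable_finsetSum _ fun j _ => ?_
    exact ((hiB w j).const_mul _).sub ((hiA w).const_mul _)

lemma memLp_comp {m : ℕ} {Ω : Type} [MeasurableSpace Ω] (μ : Measure Ω) [IsProbabilityMeasure μ]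
    (η : Ω → Fin m) (hη : Measurable η) (g : Fin m → ℝ) : MemLp (fun ω => g (η ω)) 2 μ := by
  refine MemLp.of_bound ((measurable_of_finite g).comp hη).aestronglyMeasurable (∑ i, |g i|) ?_
  refine Filter.Eventually.of_forall fun ω => ?_
  exact Finset.single_le_sum (f := fun i => |g i|) (fun i _ => abs_nonneg _) (Finset.mem_univ _)

lemma var_bound {m : ℕ} {Ω : Type} [MeasurableSpace Ω] (μ : Measure Ω) [IsProbabilityMeasure μ]
    (η : ℕ → Ω → Fin m) (hη : ∀ n, Measurable (η n)) (P : Fin m → Fin m → ℝ)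
    (hP0 : ∀ i j, 0 ≤ P i j) (hP1 : ∀ i, ∑ j, P i j = 1)
    (H : ∀ (n : ℕ) (w : Fin (n+1) → Fin m) (j : Fin m),
      μ.real {ω | (∀ k : Fin (n+1), η k ω = w k) ∧ η (n+1) ω = j}
        = μ.real {ω | ∀ k : Fin (n+1), η k ω = w k} * P (w (Fin.last n)) j)
    (g h : Fin m → ℝ) (hgh : ∀ i, h i - ∑ j, P i j * h j = g i) (B : ℝ) (hB : ∀ i, |h i| ≤ B)
    (M : ℕ) : ∫ ω, (∑ n ∈ Finset.range M, g (η n ω)) ^ 2 ∂μ ≤ 8 * (M + 1) * B ^ 2 := by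
  have hZm : ∀ M, MemLp (fun ω => ∑ n ∈ Finset.range M, g (η n ω) + h (η M ω)) 2 μ := fun M =>
    (memLp_finsetSum _ fun n _ => memLp_comp μ (η n) (hη n) g).add
      (memLp_comp μ (η M) (hη M) h)
  have hDm : ∀ M, MemLp (fun ω => h (η (M+1) ω) - ∑ j, P (η M ω) j * h j) 2 μ := fun M =>
    (memLp_comp μ (η (M+1)) (hη (M+1)) h).sub
      (memLp_comp μ (η M) (hη M) (fun i => ∑ j, P i j * h j))
  have hPh : ∀ i, |∑ j, P i j * h j| ≤ B := by
    intro i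
    calc |∑ j, P i j * h j| ≤ ∑ j, |P i j * h j| := Finset.abs_sum_le_sum_abs _ _
      _ ≤ ∑ j, P i j * B := Finset.sum_le_sum fun j _ => by
          rw [abs_mul, abs_of_nonneg (hP0 i j)]
          exact mul_le_mul_of_nonneg_left (hB j) (hP0 i j)
      _ = B := by rw [← Finset.sum_mul, hP1, one_mul]
  have hZ : ∀ M : ℕ, ∫ ω, (∑ n ∈ Finset.range M, g (η n ω) + h (η M ω)) ^ 2 ∂μ
      ≤ (4 * M + 1) * B ^ 2 := by
    intro M
    induction M with
    | zero =>
      have : ∫ ω, (∑ n ∈ Finset.range 0, g (η n ω) + h (η 0 ω)) ^ 2 ∂μ ≤ ∫ ω, B ^ 2 ∂μ := by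
        refine integral_mono (hZm 0).integrable_sq (integrable_const _) fun ω => ?_
        simp only [Finset.range_zero, Finset.sum_empty, zero_add]
        exact sq_le_sq' (abs_le.1 (hB _)).1 (abs_le.1 (hB _)).2
      simpa using this
    | succ M ih =>
      have e : (fun ω => (∑ n ∈ Finset.range (M+1), g (η n ω) + h (η (M+1) ω)) ^ 2)
        = fun ω => (∑ n ∈ Finset.range M, g (η n ω) + h (η M ω)) ^ 2
          + (2 * ((∑ n ∈ Finset.range M, g (η n ω) + h (η M ω))
            * (h (η (M+1) ω) - ∑ j, P (η M ω) j * h j))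
          + (h (η (M+1) ω) - ∑ j, P (η M ω) j * h j) ^ 2) := by
        funext ω
        rw [Finset.sum_range_succ, ← hgh (η M ω)]
        ring
      have hmul : Integrable (fun ω => (∑ n ∈ Finset.range M, g (η n ω) + h (η M ω))
            * (h (η (M+1) ω) - ∑ j, P (η M ω) j * h j)) μ :=
        MemLp.integrable_mul (hZm M) (hDm M)
      have hadd : Integrable (fun ω => 2 * ((∑ n ∈ Finset.range M, g (η n ω) + h (η M ω))
            * (h (η (M+1) ω) - ∑ j, P (η M ω) j * h j))
          + (h (η (M+1) ω) - ∑ j, P (η M ω) j * h j) ^ 2) μ :=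
        (hmul.const_mul 2).add (hDm M).integrable_sq
      rw [e, integral_add (hZm M).integrable_sq hadd,
        integral_add (hmul.const_mul 2) (hDm M).integrable_sq, integral_const_mul]
      have h0 := mart_step μ η hη P H h M
        (fun w => ∑ k : Fin M, g (w k.castSucc) + h (w (Fin.last M)))
      simp only [Fin.val_last, Fin.val_castSucc] at h0
      have hsum : ∀ ω, ∑ k : Fin M, g (η k ω) = ∑ n ∈ Finset.range M, g (η n ω) := fun ω =>
        (Finset.sum_range (fun k => g (η k ω))).symm
      simp only [hsum] at h0
      rw [h0]
      have h1 : ∫ ω, (h (η (M+1) ω) - ∑ j, P (η M ω) j * h j) ^ 2 ∂μ ≤ ∫ ω, 4 * B ^ 2 ∂μ := by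
        refine integral_mono (hDm M).integrable_sq (integrable_const _) fun ω => ?_
        have h1 := abs_le.1 (hB (η (M+1) ω))
        have h2 := abs_le.1 (hPh (η M ω))
        show _ ≤ 4 * B ^ 2
        rw [show 4 * B ^ 2 = (2 * B) ^ 2 by ring]
        exact sq_le_sq' (by linarith) (by linarith)
      simp at h1
      push_cast
      linarith
  have hfin : ∫ ω, (∑ n ∈ Finset.range M, g (η n ω)) ^ 2 ∂μ
      ≤ ∫ ω, (2 * (∑ n ∈ Finset.range M, g (η n ω) + h (η M ω)) ^ 2 + 2 * B ^ 2) ∂μ := by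
    refine integral_mono
      (memLp_finsetSum _ fun n _ => memLp_comp μ (η n) (hη n) g).integrable_sq
      (((hZm M).integrable_sq.const_mul 2).add (integrable_const _)) fun ω => ?_
    have h1 : h (η M ω) ^ 2 ≤ B ^ 2 := sq_le_sq' (abs_le.1 (hB _)).1 (abs_le.1 (hB _)).2
    show _ ≤ 2 * (∑ n ∈ Finset.range M, g (η n ω) + h (η M ω)) ^ 2 + 2 * B ^ 2
    nlinarith [sq_nonneg (∑ n ∈ Finset.range M, g (η n ω) + 2 * h (η M ω))]
  rw [integral_add ((hZm M).integrable_sq.const_mul 2) (integrable_const _),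
    integral_const_mul] at hfin
  simp at hfin
  have := hZ M
  nlinarith [sq_nonneg B]

lemma mix_real {m : ℕ} {Ω : Type} [MeasurableSpace Ω] (Ps : Fin m → Measure Ω)
    (hprob : ∀ i, IsProbabilityMeasure (Ps i)) (q : Fin m → ℝ) (hq : ∀ i, 0 ≤ q i) (s : Set Ω) :
    (∑ i, ENNReal.ofReal (q i) • Ps i).real s = ∑ i, q i * (Ps i).real s := by
  rw [Measure.real, Measure.finsetSum_apply, ENNReal.toReal_sum]
  · refine Finset.sum_congr rfl fun i _ => ?_
    simp [Measure.real, ENNReal.toReal_mul, ENNReal.toReal_ofReal (hq i)]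
  · intro i _
    have := hprob i
    simp only [Measure.smul_apply, smul_eq_mul]
    exact ENNReal.mul_ne_top ENNReal.ofReal_ne_top (measure_ne_top _ _)

lemma start_ae {m : ℕ} {Ω : Type} [MeasurableSpace Ω] (η : ℕ → Ω → Fin m)
    (hη : ∀ n, Measurable (η n)) (Ps : Fin m → Measure Ω)
    (hprob : ∀ i, IsProbabilityMeasure (Ps i)) (p : Fin m → Fin m → ℝ)
    (hMC : ∀ n : ℕ, ∀ I : ℕ → Fin m, Ps (I 0) {ω | ∀ k ≤ n, η k ω = I k}
        = ENNReal.ofReal (∏ k ∈ Finset.Icc 1 n, p (I (k - 1)) (I k))) (i : Fin m) :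
    ∀ᵐ ω ∂(Ps i), η 0 ω = i := by
  have := hprob i
  have h0 := hMC 0 (fun _ => i)
  simp at h0
  have hms : MeasurableSet {ω | η 0 ω = i} := hη 0 (measurableSet_singleton i)
  exact (prob_compl_eq_zero_iff hms).2 h0

lemma row_sum {m : ℕ} {Ω : Type} [MeasurableSpace Ω] (η : ℕ → Ω → Fin m)
    (hη : ∀ n, Measurable (η n)) (Ps : Fin m → Measure Ω)
    (hprob : ∀ i, IsProbabilityMeasure (Ps i)) (p : Fin m → Fin m → ℝ)
    (hMC : ∀ n : ℕ, ∀ I : ℕ → Fin m, Ps (I 0) {ω | ∀ k ≤ n, η k ω = I k}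
        = ENNReal.ofReal (∏ k ∈ Finset.Icc 1 n, p (I (k - 1)) (I k))) (i : Fin m) :
    ∑ j, max (p i j) 0 = 1 := by
  have := hprob i
  have hae := start_ae η hη Ps hprob p hMC i
  have h1 : ∀ j, max (p i j) 0 = (Ps i).real (η 1 ⁻¹' {j}) := by
    intro j
    have h2 := hMC 1 (fun k => if k = 0 then i else j)
    simp at h2
    have h3 : Ps i (η 1 ⁻¹' {j}) = Ps i {ω | ∀ k ≤ 1, η k ω = if k = 0 then i else j} := by
      refine measure_congr ?_
      filter_upwards [hae] with ω hω
      refine propext ?_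
      show η 1 ω = j ↔ ∀ k ≤ 1, η k ω = if k = 0 then i else j
      constructor
      · intro h k hk
        interval_cases k
        · simpa using hω
        · simpa using h
      · intro h
        simpa using h 1 le_rfl
    rw [Measure.real, h3, h2, ENNReal.toReal_ofReal']
  simp only [h1]
  rw [sum_measureReal_preimage_singleton _ (fun y _ => hη 1 (measurableSet_singleton y))]
  simp

lemma start_step {m : ℕ} {Ω : Type} [MeasurableSpace Ω] (η : ℕ → Ω → Fin m)
    (hη : ∀ n, Measurable (η n)) (Ps : Fin m → Measure Ω)
    (hprob : ∀ i, IsProbabilityMeasure (Ps i)) (p : Fin m → Fin m → ℝ)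
    (hMC : ∀ n : ℕ, ∀ I : ℕ → Fin m, Ps (I 0) {ω | ∀ k ≤ n, η k ω = I k}
        = ENNReal.ofReal (∏ k ∈ Finset.Icc 1 n, p (I (k - 1)) (I k))) (i : Fin m)
    (n : ℕ) (w : Fin (n+1) → Fin m) (j : Fin m) :
      (Ps i).real {ω | (∀ k : Fin (n+1), η k ω = w k) ∧ η (n+1) ω = j}
        = (Ps i).real {ω | ∀ k : Fin (n+1), η k ω = w k} * max (p (w (Fin.last n)) j) 0 := by
  have := hprob i
  have hae := start_ae η hη Ps hprob p hMC i
  have hsub : {ω | (∀ k : Fin (n+1), η k ω = w k) ∧ η (n+1) ω = j}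
    ⊆ {ω | ∀ k : Fin (n+1), η k ω = w k} := fun ω h => h.1
  by_cases hi : w 0 = i
  · set I : ℕ → Fin m := fun k => if hk : k < n + 1 then w ⟨k, hk⟩ else j with hI
    have hI0 : I 0 = i := by simp [hI, hi]
    have hIn : I n = w (Fin.last n) := by simp [hI, Fin.last]
    have hIn1 : I (n+1) = j := by simp [hI]
    have e1 : {ω | ∀ k : Fin (n+1), η k ω = w k} = {ω | ∀ k ≤ n, η k ω = I k} := by
      ext ω
      simp only [mem_ofPred_eq]
      constructor
      · intro h k hk
        have := h ⟨k, by omega⟩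
        simp only [hI]
        rw [dif_pos (by omega)]
        exact this
      · intro h k
        have := h k (by omega)
        simp only [hI] at this
        rw [dif_pos k.2] at this
        exact this
    have e2 : {ω | (∀ k : Fin (n+1), η k ω = w k) ∧ η (n+1) ω = j}
        = {ω | ∀ k ≤ n+1, η k ω = I k} := by
      ext ω
      have := Set.ext_iff.1 e1 ω
      simp only [mem_ofPred_eq] at this ⊢
      rw [this]
      constructor
      · rintro ⟨h1, h2⟩ k hk
        rcases Nat.lt_or_ge n k with h | h
        · rw [show k = n + 1 by omega, hIn1, h2]
        · exact h1 k h
      · intro h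
        exact ⟨fun k hk => h k (by omega), by rw [h (n+1) le_rfl, hIn1]⟩
    have m1 := hMC n I
    have m2 := hMC (n+1) I
    rw [hI0, ← e1] at m1
    rw [hI0, ← e2, Finset.prod_Icc_succ_top (by omega), Nat.add_sub_cancel, hIn, hIn1] at m2
    rcases le_total 0 (∏ k ∈ Finset.Icc 1 n, p (I (k - 1)) (I k)) with h0 | h0
    · rw [Measure.real, Measure.real, m1, m2, ENNReal.toReal_ofReal', ENNReal.toReal_ofReal h0,
        ← mul_zero (∏ k ∈ Finset.Icc 1 n, p (I (k - 1)) (I k)), mul_max_of_nonneg _ _ h0]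
      simp
    · rw [ENNReal.ofReal_of_nonpos h0] at m1
      have m3 := measure_mono_null hsub m1
      rw [Measure.real, Measure.real, m1, m3]
      simp
  · have z : Ps i {ω | ∀ k : Fin (n+1), η k ω = w k} = 0 := by
      refine measure_mono_null ?_ hae
      intro ω h h2
      exact hi ((h 0).symm.trans h2)
    have m3 := measure_mono_null hsub z
    rw [Measure.real, Measure.real, z, m3]
    simp

lemma stat_max {m : ℕ} (p : Fin m → Fin m → ℝ) (hp : ∀ i, ∑ j, max (p i j) 0 = 1)
    (π : Fin m → ℝ) (hπ : IsStationaryDist p π) :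
    IsStationaryDist (fun i j => max (p i j) 0) π := by
  refine ⟨hπ.1, hπ.2.1, ?_⟩
  have hle : ∀ j ∈ Finset.univ, π j ≤ ∑ i, π i * max (p i j) 0 := by
    intro j _
    conv_lhs => rw [hπ.2.2 j]
    exact Finset.sum_le_sum fun i _ => mul_le_mul_of_nonneg_left (le_max_left _ _) (hπ.1 i)
  have hs : ∑ j, π j = ∑ j, ∑ i, π i * max (p i j) 0 := by
    rw [Finset.sum_comm]
    simp only [← Finset.mul_sum, hp, mul_one]
  intro j
  exact (Finset.sum_eq_sum_iff_of_le hle).1 hs j (Finset.mem_univ j)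

lemma main_bound {m N : ℕ} (hm : 0 < m) {Ω : Type} [MeasurableSpace Ω] (μ : Measure Ω)
    [IsProbabilityMeasure μ]
    (η : ℕ → Ω → Fin m) (hη : ∀ n, Measurable (η n))
    (c : ℕ → Fin m) (hcN : c N = c 0)
    (hall : ∀ i : Fin m, ∃ k ≤ N, c k = i) (P : Fin m → Fin m → ℝ)
    (hP0 : ∀ i j, 0 ≤ P i j) (hP1 : ∀ i, ∑ j, P i j = 1)
    (H : ∀ (n : ℕ) (w : Fin (n+1) → Fin m) (j : Fin m),
      μ.real {ω | (∀ k : Fin (n+1), η k ω = w k) ∧ η (n+1) ω = j}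
        = μ.real {ω | ∀ k : Fin (n+1), η k ω = w k} * P (w (Fin.last n)) j)
    (a : ℝ) (ha : 0 < a) (ha1 : a ≤ 1) (hring : ∀ k < N, a ≤ P (c k) (c (k+1)))
    (π : Fin m → ℝ) (hπ : IsStationaryDist P π)
    (f : Fin m → ℝ) (hf : ∀ i, 0 ≤ f i) (v : ℝ) (hv : 1 ≤ v) (F : ℝ) (hF : F = v * ∑ i, π i * f i)
    (K0 C : ℝ) (hK0 : K0 = m / a ^ (2*N)) (hC : C = (2*N : ℕ) / a ^ (2*N)) :
    (∀ i, f i ≤ K0 * F / v) ∧ ∀ t, 0 ≤ t →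
      ∫ ω, (∑ n ∈ Finset.range (Nat.floor (t * v)), f (η n ω) - t * F) ^ 2 ∂μ
        ≤ (16 * C ^ 2 * K0 ^ 2 + 2) * (t + 1) * F ^ 2 / v := by
  have hv0 : 0 < v := by linarith
  have hap : 0 < a ^ (2*N) := by positivity
  have hm' : (0:ℝ) < m := by exact_mod_cast hm
  set fb := ∑ i, π i * f i with hfb
  have hFv : F / v = fb := by rw [hF]; field_simp
  have hfb0 : 0 ≤ fb := Finset.sum_nonneg fun i _ => mul_nonneg (hπ.1 i) (hf i)
  have hle : ∀ i, f i ≤ K0 * fb := by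
    intro i
    have h1 := pi_lower hm c hcN hall P hP0 a ha ha1 hring π hπ i
    have h2 : π i * f i ≤ fb := Finset.single_le_sum (f := fun i => π i * f i)
      (fun i _ => mul_nonneg (hπ.1 i) (hf i)) (Finset.mem_univ i)
    have h3 : a ^ (2*N) / m * f i ≤ fb := (mul_le_mul_of_nonneg_right h1 (hf i)).trans h2
    rw [hK0, div_mul_eq_mul_div, le_div_iff₀ hap]
    rw [div_mul_eq_mul_div, div_le_iff₀ hm'] at h3
    linarith
  have hfble : fb ≤ K0 * fb := by
    calc fb ≤ ∑ i, π i * (K0 * fb) :=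
          Finset.sum_le_sum fun i _ => mul_le_mul_of_nonneg_left (hle i) (hπ.1 i)
      _ = K0 * fb := by rw [← Finset.sum_mul, hπ.2.1, one_mul]
  refine ⟨fun i => by rw [mul_div_assoc, hFv]; exact hle i, ?_⟩
  intro t ht
  obtain ⟨h, hh, hhb⟩ := poisson hm c hcN hall P hP0 hP1 a ha ha1 hring π hπ (fun i => f i - fb)
    (by simp only [mul_sub, Finset.sum_sub_distrib, ← Finset.sum_mul, hπ.2.1]; rw [← hfb]; ring)
    (K0 * fb) (fun i => abs_le.2 ⟨by linarith [hf i], by linarith [hle i]⟩)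
  rw [← hC] at hhb
  set M := Nat.floor (t * v) with hM
  have hM1 : (M:ℝ) ≤ t * v := Nat.floor_le (by positivity)
  have hM2 : t * v < M + 1 := Nat.lt_floor_add_one _
  have hvar := var_bound μ η hη P hP0 hP1 H _ h hh _ hhb M
  have hgm : MemLp (fun ω => ∑ n ∈ Finset.range M, (f (η n ω) - fb)) 2 μ :=
    memLp_finsetSum _ fun n _ => memLp_comp μ (η n) (hη n) (fun i => f i - fb)
  have hfm : MemLp (fun ω => ∑ n ∈ Finset.range M, f (η n ω) - t * F) 2 μ :=
    (memLp_finsetSum _ fun n _ => memLp_comp μ (η n) (hη n) f).sub (memLp_const _)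
  have h1 : ∫ ω, (∑ n ∈ Finset.range M, f (η n ω) - t * F) ^ 2 ∂μ
      ≤ ∫ ω, (2 * (∑ n ∈ Finset.range M, (f (η n ω) - fb)) ^ 2 + 2 * fb ^ 2) ∂μ := by
    refine integral_mono hfm.integrable_sq
      ((hgm.integrable_sq.const_mul 2).add (integrable_const _)) fun ω => ?_
    show _ ≤ 2 * (∑ n ∈ Finset.range M, (f (η n ω) - fb)) ^ 2 + 2 * fb ^ 2
    have e : ∑ n ∈ Finset.range M, f (η n ω) - t * F
        = ∑ n ∈ Finset.range M, (f (η n ω) - fb) + (M - t * v) * fb := by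
      rw [Finset.sum_sub_distrib, hF]
      simp
      ring
    show (∑ n ∈ Finset.range M, f (η n ω) - t * F) ^ 2 ≤ _
    rw [e]
    have h2 : ((M - t * v) * fb) ^ 2 ≤ fb ^ 2 :=
      sq_le_sq' (by nlinarith) (by nlinarith)
    nlinarith [sq_nonneg (∑ n ∈ Finset.range M, (f (η n ω) - fb) - (M - t * v) * fb)]
  rw [integral_add (hgm.integrable_sq.const_mul 2) (integrable_const _), integral_const_mul] at h1
  simp only [integral_const, probReal_univ, one_smul] at h1
  have e : (16 * C ^ 2 * K0 ^ 2 + 2) * (t + 1) * F ^ 2 / v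
      = (16 * C ^ 2 * K0 ^ 2 + 2) * fb ^ 2 * ((t + 1) * v) := by
    rw [hF]; field_simp
  rw [e]
  have h3 : (M:ℝ) + 1 ≤ (t + 1) * v := by linarith
  have h4 : 1 ≤ (t + 1) * v := by nlinarith
  have h5 : 8 * ((M:ℝ) + 1) * (C * (K0 * fb)) ^ 2 ≤ 8 * ((t + 1) * v) * (C * (K0 * fb)) ^ 2 := by
    gcongr
  nlinarith [mul_le_mul_of_nonneg_left h4 (sq_nonneg fb)]

lemma fStep_eq {m : ℕ} {Ω : Type} (η : ℝ → ℕ → Ω → Fin m) (f : ℝ → Fin m → ℝ)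
    (v : ℝ → ℝ) (ε t : ℝ) (ω : Ω) :
    fStep η f v ε t ω = ∑ n ∈ Finset.range (Nat.floor (t * v ε)), f ε (η ε n ω) := by
  unfold fStep
  generalize Nat.floor (t * v ε) = K
  induction K with
  | zero => simp
  | succ K ih => rw [Finset.sum_Icc_succ_top (by omega), ih, Finset.sum_range_succ]; simp

lemma ev_bound {m : ℕ} (hm : 0 < m) (ε₀ : ℝ) (hε₀ : 0 < ε₀)
    {Ω : Type} [MeasurableSpace Ω]
    (η : ℝ → ℕ → Ω → Fin m)
    (Pstart : ℝ → Fin m → Measure Ω)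
    (hprob : ∀ ε i, IsProbabilityMeasure (Pstart ε i))
    (hmeas : ∀ ε n, Measurable (η ε n))
    (p : ℝ → Fin m → Fin m → ℝ)
    (hMC : ∀ ε ∈ Ioc (0:ℝ) ε₀, ∀ n : ℕ, ∀ I : ℕ → Fin m,
      Pstart ε (I 0) {ω | ∀ k ≤ n, η ε k ω = I k}
        = ENNReal.ofReal (∏ k ∈ Finset.Icc 1 n, p ε (I (k - 1)) (I k)))
    (hB : CondB p)
    (π : ℝ → Fin m → ℝ)
    (hπ : ∀ᶠ ε in 𝓝[>] (0:ℝ), IsStationaryDist (fun i j => p ε i j) (π ε))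
    (q : ℝ → Fin m → ℝ) (Pq : ℝ → Measure Ω)
    (hq : ∀ ε ∈ Ioc (0:ℝ) ε₀, (∀ i, 0 ≤ q ε i) ∧ ∑ i, q ε i = 1)
    (hmix : ∀ ε ∈ Ioc (0:ℝ) ε₀, Pq ε = ∑ i, ENNReal.ofReal (q ε i) • Pstart ε i)
    (v : ℝ → ℝ) (hvinf : Tendsto v (𝓝[>] (0:ℝ)) atTop)
    (f : ℝ → Fin m → ℝ) (hf : ∀ ε ∈ Ioc (0:ℝ) ε₀, ∀ i, 0 ≤ f ε i) :
    ∃ K K0 : ℝ, 0 ≤ K ∧ ∀ᶠ ε in 𝓝[>] (0:ℝ), IsProbabilityMeasure (Pq ε) ∧ 1 ≤ v ε ∧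
      0 ≤ fBar π f v ε ∧ (∀ i, 0 ≤ f ε i) ∧ (∀ i, f ε i ≤ K0 * fBar π f v ε / v ε) ∧
      ∀ t, 0 ≤ t → ∫ ω, (fStep η f v ε t ω - t * fBar π f v ε) ^ 2 ∂(Pq ε)
        ≤ K * (t + 1) * (fBar π f v ε) ^ 2 / v ε := by
  obtain ⟨N, hN, c, hcN, hall, hlim⟩ := hB
  have hex : ∀ k < N, ∃ b : ℝ, 0 < b ∧ ∀ᶠ ε in 𝓝[>] (0:ℝ), b ≤ p ε (c k) (c (k+1)) := by
    intro k hk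
    have h1 := hlim k hk
    rw [Filter.liminf_eq] at h1
    have hne : {a | ∀ᶠ ε in 𝓝[>] (0:ℝ), a ≤ p ε (c k) (c (k+1))}.Nonempty := by
      by_contra hc
      rw [Set.not_nonempty_iff_eq_empty] at hc
      rw [hc, Real.sSup_empty] at h1
      exact lt_irrefl _ h1
    obtain ⟨b, hb, hb0⟩ := exists_lt_of_lt_csSup hne h1
    exact ⟨b, hb0, hb⟩
  choose! b hb0 hb using hex
  obtain ⟨a, ha, ha1, hab⟩ : ∃ a : ℝ, 0 < a ∧ a ≤ 1 ∧ ∀ k < N, a ≤ b k := by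
    have hne : (Finset.range N).Nonempty := Finset.nonempty_range_iff.2 hN.ne'
    refine ⟨min 1 ((Finset.range N).inf' hne b), ?_, min_le_left _ _, ?_⟩
    · refine lt_min one_pos ?_
      rw [Finset.lt_inf'_iff]
      exact fun k hk => hb0 k (Finset.mem_range.1 hk)
    · intro k hk
      exact (min_le_right _ _).trans (Finset.inf'_le _ (Finset.mem_range.2 hk))
  have hring : ∀ᶠ ε in 𝓝[>] (0:ℝ), ∀ k ∈ Finset.range N, b k ≤ p ε (c k) (c (k+1)) := by
    rw [Filter.eventually_all_finset]
    exact fun k hk => hb k (Finset.mem_range.1 hk)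
  have hIoc : ∀ᶠ ε in 𝓝[>] (0:ℝ), ε ∈ Ioc (0:ℝ) ε₀ := Ioc_mem_nhdsGT hε₀
  set K0 : ℝ := m / a ^ (2*N) with hK0
  set C : ℝ := (2*N : ℕ) / a ^ (2*N) with hC
  refine ⟨16 * C ^ 2 * K0 ^ 2 + 2, K0, by positivity, ?_⟩
  filter_upwards [hring, hIoc, hπ, hvinf.eventually_ge_atTop 1] with ε hr hε hst hv
  have hrow := row_sum (η ε) (hmeas ε) (Pstart ε) (hprob ε) (p ε) (hMC ε hε)
  have hst' := stat_max _ hrow _ hst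
  have hmr : ∀ s, (Pq ε).real s = ∑ i, q ε i * (Pstart ε i).real s := by
    intro s
    rw [hmix ε hε]
    exact mix_real _ (hprob ε) _ (hq ε hε).1 s
  have hpr : IsProbabilityMeasure (Pq ε) := by
    have h1 := hmr Set.univ
    have h2 : ∀ i, (Pstart ε i).real Set.univ = 1 := fun i => by
      have := hprob ε i
      simp
    simp only [h2, mul_one, (hq ε hε).2] at h1
    constructor
    rw [Measure.real, ENNReal.toReal_eq_one_iff] at h1
    exact h1
  have H : ∀ (n : ℕ) (w : Fin (n+1) → Fin m) (j : Fin m),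
      (Pq ε).real {ω | (∀ k : Fin (n+1), η ε k ω = w k) ∧ η ε (n+1) ω = j}
        = (Pq ε).real {ω | ∀ k : Fin (n+1), η ε k ω = w k} * max (p ε (w (Fin.last n)) j) 0 := by
    intro n w j
    rw [hmr, hmr, Finset.sum_mul]
    refine Finset.sum_congr rfl fun i _ => ?_
    rw [start_step (η ε) (hmeas ε) (Pstart ε) (hprob ε) (p ε) (hMC ε hε) i n w j]
    ring
  have hmb := main_bound hm (Pq ε) (η ε) (hmeas ε) c hcN hall (fun i j => max (p ε i j) 0)
    (fun i j => le_max_right _ _) hrow H a ha ha1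
    (fun k hk => (hab k hk).trans ((hr k (Finset.mem_range.2 hk)).trans (le_max_left _ _)))
    (π ε) hst' (f ε) (hf ε hε) (v ε) hv (fBar π f v ε) rfl K0 C hK0 hC
  refine ⟨hpr, hv, ?_, hf ε hε, hmb.1, ?_⟩
  · exact mul_nonneg (by linarith)
      (Finset.sum_nonneg fun i _ => mul_nonneg (hst.1 i) (hf ε hε i))
  · intro t ht
    simp only [fStep_eq]
    exact hmb.2 t ht

lemma exp_aux (x y c : ℝ) (hc : 0 < c) (hx : c ≤ x) (hxy : x ≤ y) :
    Real.exp (-x) - Real.exp (-y) ≤ (y - x) / c := by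
  have h1 : Real.exp (-y) = Real.exp (-x) * Real.exp (-(y - x)) := by
    rw [← Real.exp_add]; congr 1; ring
  have h2 := Real.add_one_le_exp (-(y - x))
  have h3 : Real.exp (-x) ≤ 1 / c := by
    rw [Real.exp_neg, ← one_div]
    apply one_div_le_one_div_of_le hc
    linarith [Real.add_one_le_exp x]
  calc Real.exp (-x) - Real.exp (-y) = Real.exp (-x) * (1 - Real.exp (-(y - x))) := by
        rw [h1]; ring
    _ ≤ Real.exp (-x) * (y - x) :=
        mul_le_mul_of_nonneg_left (by linarith) (Real.exp_pos _).le
    _ ≤ 1 / c * (y - x) := mul_le_mul_of_nonneg_right h3 (by linarith)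
    _ = (y - x) / c := by ring

lemma exp_ineq (a b : ℝ) (ha : 0 ≤ a) (hb : 0 < b) :
    |Real.exp (-a) - Real.exp (-b)| ≤ 2 * |a - b| / b := by
  rcases lt_or_ge a (b / 2) with h | h
  · have h1 : Real.exp (-a) ≤ 1 := Real.exp_le_one_iff.2 (by linarith)
    have h2 : Real.exp (-b) ≤ 1 := Real.exp_le_one_iff.2 (by linarith)
    have h3 := Real.exp_pos (-a)
    have h4 := Real.exp_pos (-b)
    have h5 : 1 ≤ 2 * |a - b| / b := by
      rw [le_div_iff₀ hb, abs_of_neg (by linarith)]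
      linarith
    exact (abs_le.2 ⟨by linarith, by linarith⟩ : _ ≤ (1:ℝ)).trans h5
  · rcases le_total a b with hab | hab
    · have := exp_aux a b (b/2) (by linarith) h hab
      rw [abs_of_nonneg (sub_nonneg.2 (Real.exp_le_exp.2 (by linarith))),
        abs_of_nonpos (by linarith : a - b ≤ 0)]
      calc _ ≤ _ := this
        _ = _ := by field_simp; ring
    · have := exp_aux b a (b/2) (by linarith) (by linarith) hab
      rw [abs_sub_comm, abs_of_nonneg (sub_nonneg.2 (Real.exp_le_exp.2 (by linarith))),
        abs_of_nonneg (by linarith : 0 ≤ a - b)]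
      calc _ ≤ _ := this
        _ = _ := by field_simp

lemma laplace_bound {Ω : Type} [MeasurableSpace Ω] (μ : Measure Ω) [IsProbabilityMeasure μ]
    (Y : Ω → ℝ) (hY : MemLp Y 2 μ) (hY0 : ∀ ω, 0 ≤ Y ω) (F s v K : ℝ) (hF : 0 < F) (hs : 0 < s)
    (hv : 0 < v) (hK : ∫ ω, (Y ω - F) ^ 2 ∂μ ≤ K * F ^ 2 / v) :
    |∫ ω, Real.exp (-(s * Y ω)) ∂μ - Real.exp (-(s * F))| ≤ (1 + K) / √v := by
  have hr : 0 < √v := Real.sqrt_pos.2 hv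
  have hrr : √v * √v = v := Real.mul_self_sqrt hv.le
  have hint : Integrable (fun ω => Real.exp (-(s * Y ω))) μ := by
    refine Integrable.of_bound (Real.continuous_exp.comp_aestronglyMeasurable
      (hY.aestronglyMeasurable.const_mul s).neg) 1 (Filter.Eventually.of_forall fun ω => ?_)
    rw [Real.norm_eq_abs, abs_of_pos (Real.exp_pos _)]
    exact Real.exp_le_one_iff.2 (by have := mul_nonneg hs.le (hY0 ω); linarith)
  have hYF : MemLp (fun ω => Y ω - F) 2 μ := hY.sub (memLp_const F)
  have hpt : ∀ ω, |Real.exp (-(s * Y ω)) - Real.exp (-(s * F))|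
      ≤ 1 / √v + √v / F ^ 2 * (Y ω - F) ^ 2 := by
    intro ω
    refine (exp_ineq (s * Y ω) (s * F) (mul_nonneg hs.le (hY0 ω)) (by positivity)).trans ?_
    have e : 2 * |s * Y ω - s * F| / (s * F) = 2 * (|Y ω - F| / F) := by
      rw [← mul_sub, abs_mul, abs_of_pos hs]; field_simp
    rw [e]
    have e2 : √v / F ^ 2 * (Y ω - F) ^ 2 = √v * (|Y ω - F| / F) ^ 2 := by
      rw [div_pow, sq_abs]; ring
    rw [e2]
    generalize |Y ω - F| / F = x
    have : 0 ≤ (1 - √v * x) ^ 2 / √v := by positivity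
    have e3 : (1 - √v * x) ^ 2 / √v = 1 / √v + √v * x ^ 2 - 2 * x := by field_simp; ring
    linarith
  have h1 : ∫ ω, Real.exp (-(s * Y ω)) ∂μ - Real.exp (-(s * F))
      = ∫ ω, (Real.exp (-(s * Y ω)) - Real.exp (-(s * F))) ∂μ := by
    rw [integral_sub hint (integrable_const _)]; simp
  rw [h1]
  calc |∫ ω, (Real.exp (-(s * Y ω)) - Real.exp (-(s * F))) ∂μ|
      ≤ ∫ ω, |Real.exp (-(s * Y ω)) - Real.exp (-(s * F))| ∂μ := abs_integral_le_integral_abs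
    _ ≤ ∫ ω, (1 / √v + √v / F ^ 2 * (Y ω - F) ^ 2) ∂μ :=
        integral_mono (hint.sub (integrable_const _)).abs
          ((integrable_const _).add (hYF.integrable_sq.const_mul _)) hpt
    _ = 1 / √v + √v / F ^ 2 * ∫ ω, (Y ω - F) ^ 2 ∂μ := by
        rw [integral_add (integrable_const _) (hYF.integrable_sq.const_mul _), integral_const_mul]
        simp
    _ ≤ 1 / √v + √v / F ^ 2 * (K * F ^ 2 / v) := by gcongr
    _ = (1 + K) / √v := by
        nth_rewrite 3 [← hrr]
        field_simp

lemma sup_incl {m : ℕ} {Ω : Type} (η : ℝ → ℕ → Ω → Fin m) (f : ℝ → Fin m → ℝ) (v : ℝ → ℝ)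
    (ε : ℝ) (hf : ∀ i, 0 ≤ f ε i) (hv : 0 ≤ v ε) (f₀ T δ : ℝ) (hf₀ : 0 < f₀) (hT : 0 < T)
    (n : ℕ) (hn : 0 < n) (hnd : f₀ * (T / n) ≤ δ / 2) :
    {ω | ∃ t, 0 ≤ t ∧ t ≤ T ∧ δ < |fStep η f v ε t ω - f₀ * t|}
      ⊆ ⋃ k ∈ Finset.range (n + 2),
        {ω | δ / 2 ≤ |fStep η f v ε (k * (T / n)) ω - f₀ * (k * (T / n))|} := by
  have hmono : ∀ ω s t, s ≤ t → fStep η f v ε s ω ≤ fStep η f v ε t ω := by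
    intro ω s t hst
    rw [fStep_eq, fStep_eq]
    refine Finset.sum_le_sum_of_subset_of_nonneg ?_ fun _ _ _ => hf _
    exact Finset.range_subset_range.2 (Nat.floor_mono (mul_le_mul_of_nonneg_right hst hv))
  have hn' : (0:ℝ) < n := by exact_mod_cast hn
  have hd : 0 < T / n := by positivity
  set d := T / n with hdd
  rintro ω ⟨t, ht0, htT, hδ⟩
  set k := Nat.floor (t / d) with hk
  have hk1 : k * d ≤ t := by
    have := Nat.floor_le (show 0 ≤ t / d by positivity)
    rwa [le_div_iff₀ hd] at this
  have hk2 : t < (k + 1) * d := by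
    have := Nat.lt_floor_add_one (t / d)
    rwa [div_lt_iff₀ hd] at this
  have hkn : k ≤ n := by
    have h1 : (k:ℝ) * d ≤ n * d := by
      have : (n:ℝ) * d = T := by rw [hdd]; field_simp
      linarith
    exact_mod_cast le_of_mul_le_mul_right h1 hd
  by_contra hc
  simp only [Set.mem_iUnion, Finset.mem_range, not_exists] at hc
  have hc1 := hc k (by omega)
  have hc2 := hc (k+1) (by omega)
  simp only [Set.mem_ofPred_eq, not_le] at hc1 hc2
  push_cast at hc2
  have m1 := hmono ω _ _ hk1
  have m2 := hmono ω _ _ hk2.le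
  rw [abs_lt] at hc1 hc2
  have q1 : f₀ * t ≤ f₀ * ((k + 1) * d) := mul_le_mul_of_nonneg_left hk2.le hf₀.le
  have q2 : f₀ * (k * d) ≤ f₀ * t := mul_le_mul_of_nonneg_left hk1 hf₀.le
  have q3 : f₀ * ((k + 1) * d) = f₀ * (k * d) + f₀ * d := by ring
  have : |fStep η f v ε t ω - f₀ * t| ≤ δ := abs_le.2 ⟨by linarith, by linarith⟩
  linarith

lemma cheb {Ω : Type} [MeasurableSpace Ω] (μ : Measure Ω) [IsProbabilityMeasure μ]
    (Y : Ω → ℝ) (hY : MemLp Y 2 μ) (A b δ R : ℝ) (hδ : 0 < δ)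
    (hR : ∫ ω, (Y ω - A) ^ 2 ∂μ ≤ R) :
    μ.real {ω | δ ≤ |Y ω - b|} ≤ (2 * R + 2 * (A - b) ^ 2) / δ ^ 2 := by
  have hA : MemLp (fun ω => Y ω - A) 2 μ := hY.sub (memLp_const A)
  have hb : MemLp (fun ω => Y ω - b) 2 μ := hY.sub (memLp_const b)
  have h1 : ∫ ω, (Y ω - b) ^ 2 ∂μ ≤ ∫ ω, (2 * (Y ω - A) ^ 2 + 2 * (A - b) ^ 2) ∂μ := by
    refine integral_mono hb.integrable_sq
      ((hA.integrable_sq.const_mul 2).add (integrable_const _)) fun ω => ?_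
    show (Y ω - b) ^ 2 ≤ 2 * (Y ω - A) ^ 2 + 2 * (A - b) ^ 2
    nlinarith [sq_nonneg ((Y ω - A) - (A - b))]
  rw [integral_add (hA.integrable_sq.const_mul 2) (integrable_const _), integral_const_mul] at h1
  simp only [integral_const, probReal_univ, one_smul] at h1
  have h2 := mul_meas_ge_le_integral_of_nonneg (μ := μ) (f := fun ω => (Y ω - b) ^ 2)
    (Filter.Eventually.of_forall fun ω => sq_nonneg _) hb.integrable_sq (δ ^ 2)
  have e : {ω | δ ≤ |Y ω - b|} = {ω | δ ^ 2 ≤ (Y ω - b) ^ 2} := by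
    ext ω
    simp only [Set.mem_ofPred_eq]
    rw [sq_le_sq, abs_of_pos hδ]
  rw [e, le_div_iff₀ (by positivity)]
  linarith

lemma necessity_aux (μ : Measure ℝ) [IsProbabilityMeasure μ] (h0 : μ (Iio 0) = 0)
    (f₀ : ℝ) (h : ∀ s > 0, ∫ x, Real.exp (-(s * x)) ∂μ = Real.exp (-(s * f₀))) :
    μ = Measure.dirac f₀ := by
  have hae : ∀ᵐ x ∂μ, 0 ≤ x := by
    filter_upwards [measure_eq_zero_iff_ae_notMem.1 h0] with x hx
    simpa using hx
  have hint : ∀ s > 0, Integrable (fun x => Real.exp (-(s * x))) μ := by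
    intro s hs
    refine Integrable.of_bound (by fun_prop) 1 ?_
    filter_upwards [hae] with x hx
    rw [Real.norm_eq_abs, abs_of_pos (Real.exp_pos _)]
    exact Real.exp_le_one_iff.2 (by have := mul_nonneg hs.le hx; linarith)
  have e : (fun x => (Real.exp (-(1 * x)) - Real.exp (-(1 * f₀))) ^ 2)
      = fun x => Real.exp (-(2 * x)) - 2 * Real.exp (-(1 * f₀)) * Real.exp (-(1 * x))
        + Real.exp (-(2 * f₀)) := by
    funext x
    have e1 : ∀ y : ℝ, Real.exp (-(2 * y)) = Real.exp (-(1 * y)) ^ 2 := by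
      intro y; rw [← Real.exp_nat_mul]; congr 1; push_cast; ring
    rw [e1, e1]; ring
  have i1 : Integrable (fun x => Real.exp (-(2 * x))
      - 2 * Real.exp (-(1 * f₀)) * Real.exp (-(1 * x))) μ :=
    (hint 2 two_pos).sub ((hint 1 one_pos).const_mul _)
  have hz : ∫ x, (Real.exp (-(1 * x)) - Real.exp (-(1 * f₀))) ^ 2 ∂μ = 0 := by
    rw [e, integral_add i1 (integrable_const _),
      integral_sub (hint 2 two_pos) ((hint 1 one_pos).const_mul _), integral_const_mul,
      h 2 two_pos, h 1 one_pos]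
    simp only [integral_const, probReal_univ, one_smul]
    rw [show -(2 * f₀) = -(1 * f₀) + -(1 * f₀) by ring, Real.exp_add]
    ring
  have hi : Integrable (fun x => (Real.exp (-(1 * x)) - Real.exp (-(1 * f₀))) ^ 2) μ := by
    rw [e]; exact i1.add (integrable_const _)
  rw [integral_eq_zero_iff_of_nonneg (fun x => sq_nonneg _) hi] at hz
  have hc : (fun x : ℝ => x) =ᵐ[μ] fun _ => f₀ := by
    filter_upwards [hz] with x hx
    have h1 : Real.exp (-(1 * x)) - Real.exp (-(1 * f₀)) = 0 := by
      simpa using hx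
    have h2 := Real.exp_injective (sub_eq_zero.1 h1)
    linarith
  have h3 : Measure.map (fun x : ℝ => x) μ = Measure.map (fun _ : ℝ => f₀) μ :=
    Measure.map_congr hc
  rw [Measure.map_const, measure_univ, one_smul] at h3
  rw [← h3]
  exact Measure.map_id.symm

/-- Lemma 5: under condition B, condition G (`f_ε → f₀ ∈ (0,∞)`) is
necessary and sufficient for convergence in distribution of `κ_ε(1)` to a nonnegative
random variable not concentrated at zero; in that case the limit is the constant `f₀`
and `κ_ε(·)` converges to `f₀ t` uniformly on compacts in probability. -/
theorem stmt12 {m : ℕ} (hm : 0 < m) (ε₀ : ℝ) (hε₀ : 0 < ε₀)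
    {Ω : Type} [MeasurableSpace Ω]
    (η : ℝ → ℕ → Ω → Fin m)
    (Pstart : ℝ → Fin m → Measure Ω)
    (hprob : ∀ ε i, IsProbabilityMeasure (Pstart ε i))
    (hmeas : ∀ ε n, Measurable (η ε n))
    (p : ℝ → Fin m → Fin m → ℝ)
    (hMC : ∀ ε ∈ Ioc (0:ℝ) ε₀, ∀ n : ℕ, ∀ I : ℕ → Fin m,
      Pstart ε (I 0) {ω | ∀ k ≤ n, η ε k ω = I k}
        = ENNReal.ofReal (∏ k ∈ Finset.Icc 1 n, p ε (I (k - 1)) (I k)))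
    (hB : CondB p)
    (π : ℝ → Fin m → ℝ)
    (hπ : ∀ᶠ ε in 𝓝[>] (0:ℝ), IsStationaryDist (fun i j => p ε i j) (π ε))
    (q : ℝ → Fin m → ℝ) (Pq : ℝ → Measure Ω)
    (hq : ∀ ε ∈ Ioc (0:ℝ) ε₀, (∀ i, 0 ≤ q ε i) ∧ ∑ i, q ε i = 1)
    (hmix : ∀ ε ∈ Ioc (0:ℝ) ε₀, Pq ε = ∑ i, ENNReal.ofReal (q ε i) • Pstart ε i)
    (v : ℝ → ℝ) (hvpos : ∀ ε ∈ Ioc (0:ℝ) ε₀, 0 < v ε)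
    (hvinf : Tendsto v (𝓝[>] (0:ℝ)) atTop)
    -- nonrandom nonnegative rewards f_{ε,i}
    (f : ℝ → Fin m → ℝ) (hf : ∀ ε ∈ Ioc (0:ℝ) ε₀, ∀ i, 0 ≤ f ε i) :
    -- sufficiency: condition G implies convergence in distribution of κ_ε(1) to the
    -- constant f₀, together with uniform convergence in probability on compacts
    (∀ f₀ : ℝ, 0 < f₀ → Tendsto (fBar π f v) (𝓝[>] (0:ℝ)) (𝓝 f₀) →
      (∀ s > 0, Tendsto (fun ε => ∫ ω, Real.exp (-(s * fStep η f v ε 1 ω)) ∂(Pq ε))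
        (𝓝[>] (0:ℝ)) (𝓝 (Real.exp (-(s * f₀))))) ∧
      (∀ T > (0:ℝ), ∀ δ > (0:ℝ),
        Tendsto (fun ε => (Pq ε {ω | ∃ t, 0 ≤ t ∧ t ≤ T ∧
            δ < |fStep η f v ε t ω - f₀ * t|}).toReal)
          (𝓝[>] (0:ℝ)) (𝓝 0))) ∧
    -- necessity: convergence in distribution of κ_ε(1) to a nonnegative limit law μ not
    -- concentrated at zero implies condition G, and μ is the unit mass at f₀
    (∀ μ : Measure ℝ, IsProbabilityMeasure μ → μ (Iio 0) = 0 → μ {0} < 1 →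
      (∀ s > 0, Tendsto (fun ε => ∫ ω, Real.exp (-(s * fStep η f v ε 1 ω)) ∂(Pq ε))
        (𝓝[>] (0:ℝ)) (𝓝 (∫ x, Real.exp (-(s * x)) ∂μ))) →
      ∃ f₀ : ℝ, 0 < f₀ ∧ Tendsto (fBar π f v) (𝓝[>] (0:ℝ)) (𝓝 f₀) ∧
        μ = Measure.dirac f₀) := by
  obtain ⟨K, K0, hK0, hev⟩ := ev_bound hm ε₀ hε₀ η Pstart hprob hmeas p hMC hB π hπ q Pq hq hmix v
    hvinf f hf
  have hmem : ∀ ε t, IsProbabilityMeasure (Pq ε) → MemLp (fStep η f v ε t) 2 (Pq ε) := by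
    intro ε t hp
    have : fStep η f v ε t
        = fun ω => ∑ n ∈ Finset.range (Nat.floor (t * v ε)), f ε (η ε n ω) :=
      funext fun ω => fStep_eq η f v ε t ω
    rw [this]
    exact memLp_finsetSum _ fun n _ => memLp_comp (Pq ε) (η ε n) (hmeas ε n) (f ε)
  have hU : ∀ s > 0, Tendsto (fun ε => ∫ ω, Real.exp (-(s * fStep η f v ε 1 ω)) ∂(Pq ε)
      - Real.exp (-(s * fBar π f v ε))) (𝓝[>] (0:ℝ)) (𝓝 0) := by
    intro s hs
    have hlim : Tendsto (fun ε => (1 + K * (1 + 1)) / √(v ε)) (𝓝[>] (0:ℝ)) (𝓝 0) :=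
      (Real.tendsto_sqrt_atTop.comp hvinf).const_div_atTop _
    refine squeeze_zero_norm' ?_ hlim
    filter_upwards [hev] with ε hε
    obtain ⟨hp, hv1, hF0, hf0, hfK, hvar⟩ := hε
    have hv0 : 0 < v ε := by linarith
    rw [Real.norm_eq_abs]
    rcases hF0.eq_or_lt with hF | hF
    · have hz : ∀ i, f ε i = 0 := by
        intro i
        have := hfK i
        rw [← hF] at this
        simp at this
        exact le_antisymm this (hf0 i)
      have hz2 : ∀ ω, fStep η f v ε 1 ω = 0 := by
        intro ω; simp [fStep_eq, hz]
      simp only [hz2, ← hF]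
      simp
      positivity
    · have h1 := hvar 1 zero_le_one
      rw [one_mul] at h1
      refine laplace_bound (Pq ε) (fStep η f v ε 1) (hmem ε 1 hp) ?_ _ s (v ε) _ hF hs hv0 h1
      intro ω
      rw [fStep_eq]
      exact Finset.sum_nonneg fun _ _ => hf0 _
  refine ⟨?_, ?_⟩
  · intro f₀ hf₀ hG
    refine ⟨?_, ?_⟩
    · intro s hs
      have h1 : Tendsto (fun ε => Real.exp (-(s * fBar π f v ε))) (𝓝[>] (0:ℝ))
          (𝓝 (Real.exp (-(s * f₀)))) :=
        (Real.continuous_exp.tendsto _).comp (hG.const_mul s).neg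
      simpa using (hU s hs).add h1
    · intro T hT δ hδ
      have hpt : ∀ t ≥ 0, Tendsto (fun ε => (Pq ε).real
          {ω | δ / 2 ≤ |fStep η f v ε t ω - f₀ * t|}) (𝓝[>] (0:ℝ)) (𝓝 0) := by
        intro t ht
        have hlim : Tendsto (fun ε => (2 * (K * (t + 1) * (fBar π f v ε) ^ 2 / v ε)
            + 2 * (t * fBar π f v ε - f₀ * t) ^ 2) / (δ / 2) ^ 2) (𝓝[>] (0:ℝ)) (𝓝 0) := by
          have h1 : Tendsto (fun ε => K * (t + 1) * (fBar π f v ε) ^ 2 / v ε) (𝓝[>] (0:ℝ))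
              (𝓝 0) := ((hG.pow 2).const_mul _).div_atTop hvinf
          have h2 : Tendsto (fun ε => t * fBar π f v ε - f₀ * t) (𝓝[>] (0:ℝ))
              (𝓝 (t * f₀ - f₀ * t)) := (hG.const_mul t).sub tendsto_const_nhds
          have h3 := (((h1.const_mul 2).add ((h2.pow 2).const_mul 2)).div_const ((δ / 2) ^ 2))
          convert h3 using 2
          ring
        refine squeeze_zero' (Filter.Eventually.of_forall fun ε => measureReal_nonneg) ?_ hlim
        filter_upwards [hev] with ε hε
        obtain ⟨hp, hv1, hF0, hf0, hfK, hvar⟩ := hε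
        exact cheb (Pq ε) _ (hmem ε t hp) _ _ _ _ (by positivity) (hvar t ht)
      obtain ⟨n, hn⟩ := exists_nat_gt (f₀ * T / (δ / 2))
      have hn0 : (0:ℝ) < n := lt_of_le_of_lt (by positivity) hn
      have hn1 : 0 < n := by exact_mod_cast hn0
      have hnd : f₀ * (T / n) ≤ δ / 2 := by
        rw [div_lt_iff₀ (by positivity)] at hn
        rw [← mul_div_assoc, div_le_iff₀ hn0]
        linarith
      have hlim : Tendsto (fun ε => ∑ k ∈ Finset.range (n + 2), (Pq ε).real
          {ω | δ / 2 ≤ |fStep η f v ε (k * (T / n)) ω - f₀ * (k * (T / n))|}) (𝓝[>] (0:ℝ))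
          (𝓝 0) := by
        have := tendsto_finsetSum (Finset.range (n + 2)) fun k _ =>
          hpt ((k:ℝ) * (T / n)) (by positivity)
        simpa using this
      refine squeeze_zero' (Filter.Eventually.of_forall fun ε => ENNReal.toReal_nonneg) ?_ hlim
      filter_upwards [hev] with ε hε
      obtain ⟨hp, hv1, hF0, hf0, hfK, hvar⟩ := hε
      refine le_trans (measureReal_mono (μ := Pq ε)
        (sup_incl η f v ε hf0 (by linarith) f₀ T δ hf₀ hT n hn1 hnd)
        (measure_ne_top _ _)) ?_
      exact measureReal_biUnion_finset_le _ _
  · intro μ hμ h0 h1 hL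
    have hE : ∀ s > 0, Tendsto (fun ε => Real.exp (-(s * fBar π f v ε))) (𝓝[>] (0:ℝ))
        (𝓝 (∫ x, Real.exp (-(s * x)) ∂μ)) := by
      intro s hs
      simpa using (hL s hs).sub (hU s hs)
    have hae : ∀ᵐ x ∂μ, 0 ≤ x := by
      filter_upwards [measure_eq_zero_iff_ae_notMem.1 h0] with x hx
      simpa using hx
    have hint : Integrable (fun x => Real.exp (-(1 * x))) μ := by
      refine Integrable.of_bound (by fun_prop) 1 ?_
      filter_upwards [hae] with x hx
      rw [Real.norm_eq_abs, abs_of_pos (Real.exp_pos _)]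
      exact Real.exp_le_one_iff.2 (by linarith)
    have hpos : 0 < ∫ x, Real.exp (-(1 * x)) ∂μ := integral_exp_pos hint
    set f₀ := -Real.log (∫ x, Real.exp (-(1 * x)) ∂μ) with hf₀
    have hG : Tendsto (fBar π f v) (𝓝[>] (0:ℝ)) (𝓝 f₀) := by
      have := ((hE 1 one_pos).log hpos.ne').neg
      rw [← hf₀] at this
      simpa only [Real.log_exp, one_mul, neg_neg] using this
    have hμd : μ = Measure.dirac f₀ := by
      refine necessity_aux μ h0 f₀ fun s hs => ?_
      have h2 : Tendsto (fun ε => Real.exp (-(s * fBar π f v ε))) (𝓝[>] (0:ℝ))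
          (𝓝 (Real.exp (-(s * f₀)))) :=
        (Real.continuous_exp.tendsto _).comp (hG.const_mul s).neg
      exact tendsto_nhds_unique (hE s hs) h2
    refine ⟨f₀, ?_, hG, hμd⟩
    have hge : 0 ≤ f₀ := by
      refine ge_of_tendsto hG ?_
      filter_upwards [hev] with ε hε
      exact hε.2.2.1
    rcases hge.eq_or_lt with h | h
    · exfalso
      rw [hμd, ← h] at h1
      simp at h1
    · exact h
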